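/- Let φ : ℕ⁺ × ℕ⁺ → ℕ⁺ be a bijection which is a compatible ordering. Then one can choose, simultaneously for all positive integers j, finite sets S_j of positive integers and positive integers (k_n(j))_{n ∈ S_j} such that {k : 1 ≤ k ≤ j} = ⋃_{n ∈ S_j} {φ(n,m) : 1 ≤ m ≤ k_n(j)} for every j, and moreover for all positive integers j and l one has S_j ⊆ S_{j+l}, the set S_{j+l} \ S_j is disjoint from S_j, and k_n(j) ≤ k_n(j+l) for all n ∈ S_j. -/

import Mathlib

open Filter Set

/-!
Row `n` is strictly increasing, so its entries of size at most `j` occupy a finite initial segment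
`{m | m ≤ k j n}`. Taking for `S j` the rows of chosen preimages of the elements of `{x | x ≤ j}`,
these segments cover `{x | x ≤ j}`, and both `S j` and the segments can only grow with `j`.
-/

theorem exists_eq_Iic_of_isLowerSet_of_finite {β : Type*} [LinearOrder β] {s : Set β}
    (hlower : IsLowerSet s) (hfin : s.Finite) (hne : s.Nonempty) : ∃ k, s = Iic k := by
  obtain ⟨k, hk, hmax⟩ := hfin.exists_maximal hne
  exact ⟨k, Subset.antisymm (fun m hm => (le_total m k).elim id (hmax hm)) (hlower.Iic_subset hk)⟩

theorem exists_preimage_Iic_eq_Iic_of_strictMono {α β : Type*} [Preorder α]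
    [LocallyFiniteOrderBot α] [LinearOrder β] {f : β → α} (hf : StrictMono f) {a : α}
    (hne : (f ⁻¹' Iic a).Nonempty) : ∃ k, f ⁻¹' Iic a = Iic k :=
  exists_eq_Iic_of_isLowerSet_of_finite ((isLowerSet_Iic a).preimage hf.monotone)
    ((finite_Iic a).preimage hf.injective.injOn) hne

theorem biUnion_image_preimage_eq_of_subset {ι α β : Type*} {f : ι → β → α} {S : Set ι}
    {s : Set α} (hs : s ⊆ ⋃ n ∈ S, range (f n)) : ⋃ n ∈ S, f n '' (f n ⁻¹' s) = s := by
  simp only [image_preimage_eq_inter_range, ← inter_iUnion₂, inter_eq_left.mpr hs]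

theorem stmt1_general {ι α β : Type*} [Preorder α] [LocallyFiniteOrderBot α] [LinearOrder β]
    (φ : ι × β → α) (hsurj : Function.Surjective φ) (hmono : ∀ n, StrictMono fun m => φ (n, m)) :
    ∃ (S : α → Finset ι) (k : α → ι → β),
      (∀ j, Iic j = ⋃ n ∈ S j, (fun m => φ (n, m)) '' Iic (k j n)) ∧
        Monotone S ∧ ∀ ⦃i j⦄, i ≤ j → ∀ n ∈ S i, k i n ≤ k j n := by
  classical
  choose row col hφ using fun x => Prod.exists.mp (hsurj x)
  let S (j : α) : Finset ι := (Finset.Iic j).image row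
  have hS : Monotone S := fun i j hij =>
    Finset.image_subset_image (Finset.Iic_subset_Iic.mpr hij)
  have hne : ∀ j, ∀ n ∈ S j, ((fun m => φ (n, m)) ⁻¹' Iic j).Nonempty := by
    intro j n hn
    obtain ⟨x, hx, rfl⟩ := Finset.mem_image.mp hn
    exact ⟨col x, (hφ x).trans_le (Finset.mem_Iic.mp hx)⟩
  have hmax : ∀ j, ∃ k : ι → β, ∀ n ∈ S j, (fun m => φ (n, m)) ⁻¹' Iic j = Iic (k n) := by
    intro j
    have : Nonempty β := ⟨col j⟩
    choose! k hk using fun n hn => exists_preimage_Iic_eq_Iic_of_strictMono (hmono n) (hne j n hn)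
    exact ⟨k, hk⟩
  choose k hk using hmax
  refine ⟨S, k, fun j => ?_, hS, fun i j hij n hn => ?_⟩
  · have hcover : Iic j ⊆ ⋃ n ∈ (S j : Set ι), range fun m => φ (n, m) := fun x hx =>
      mem_biUnion (Finset.mem_image_of_mem row (Finset.mem_Iic.mpr hx)) ⟨col x, hφ x⟩
    calc Iic j = ⋃ n ∈ S j, (fun m => φ (n, m)) '' ((fun m => φ (n, m)) ⁻¹' Iic j) :=
          (biUnion_image_preimage_eq_of_subset hcover).symm
      _ = ⋃ n ∈ S j, (fun m => φ (n, m)) '' Iic (k j n) :=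
          iUnion₂_congr fun n hn => by rw [hk j n hn]
  · have hseg : Iic (k i n) ⊆ Iic (k j n) := by
      rw [← hk i n hn, ← hk j n (hS hij hn)]
      exact preimage_mono (Iic_subset_Iic.mpr hij)
    exact Iic_subset_Iic.mp hseg

/-- Let `φ : ℕ⁺ × ℕ⁺ → ℕ⁺` be a bijection which is a compatible ordering.
Then one can choose, simultaneously for all positive integers `j`, finite sets `S j` of positive
integers and positive integers `(k j n)_{n ∈ S j}` such that
`{x : 1 ≤ x ≤ j} = ⋃_{n ∈ S j} {φ (n, m) : 1 ≤ m ≤ k j n}` for every `j`, and such that for all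
positive integers `j` and `l` one has `S j ⊆ S (j + l)`, the set `S (j + l) \ S j` is disjoint
from `S j`, and `k j n ≤ k (j + l) n` for all `n ∈ S j`. -/
theorem stmt1 (φ : ℕ+ × ℕ+ → ℕ+) (hbij : Function.Bijective φ)
    (hcomp : ∀ (n : ℕ+) (m m' : ℕ+), m < m' → φ (n, m) < φ (n, m')) :
    ∃ (S : ℕ+ → Finset ℕ+) (k : ℕ+ → ℕ+ → ℕ+),
      (∀ j : ℕ+,
        {x : ℕ+ | x ≤ j} = ⋃ n ∈ S j, {x : ℕ+ | ∃ m : ℕ+, m ≤ k j n ∧ φ (n, m) = x}) ∧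
      (∀ j l : ℕ+,
        S j ⊆ S (j + l) ∧ Disjoint (S (j + l) \ S j) (S j) ∧
          ∀ n ∈ S j, k j n ≤ k (j + l) n) := by
  obtain ⟨S, k, hcover, hS, hk⟩ := stmt1_general φ hbij.surjective hcomp
  exact ⟨S, k, hcover, fun j l => have hle := (PNat.lt_add_right j l).le
    ⟨hS hle, Finset.sdiff_disjoint, hk hle⟩⟩
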